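/- Let w be a Kreweras word of length 3n. Then for every j ∈ {1,…,3n}, w_{σ_w(j)} = A if and only if σ_w(j) < j; equivalently, {i ∈ [3n] : w_i = A} = {i ∈ [3n] : σ_w^{-1}(i) > i} and {i ∈ [3n] : w_i ∈ {B,C}} = {i ∈ [3n] : σ_w^{-1}(i) < i}. In particular, σ_w has no fixed points. -/

import Mathlib

/-- The three letters of a Kreweras word. -/
inductive KLetter : Type
  | A | B | C
deriving DecidableEq, Repr

open KLetter

/-- `w` is a Kreweras word of length `3 * n`: it has `n` `A`'s, `n` `B`'s, `n` `C`'s,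
and every prefix has at least as many `A`'s as `B`'s and at least as many `A`'s as `C`'s. -/
def IsKrewerasWord (n : ℕ) (w : List KLetter) : Prop :=
  w.length = 3 * n ∧ w.count A = n ∧ w.count B = n ∧ w.count C = n ∧
  ∀ k : ℕ, (w.take k).count B ≤ (w.take k).count A ∧
           (w.take k).count C ≤ (w.take k).count A

/-- `kiota w` is the smallest index `ι ≥ 1` (1-indexed) such that the prefix of
length `ι` of `w` has equally many `A`'s as `B`'s, or equally many `A`'s as `C`'s
(and `0` if no such index exists). -/
def kiota (w : List KLetter) : ℕ :=
  (((List.range (w.length + 1)).filter fun k =>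
      decide (1 ≤ k) &&
      (((w.take k).count A == (w.take k).count B) ||
       ((w.take k).count A == (w.take k).count C))).headD 0)

/-- Promotion of a Kreweras word:
`pro w = (w₂, …, w_{ι-1}, A, w_{ι+1}, …, w_{3n}, w_ι)` where `ι = kiota w`. -/
def pro (w : List KLetter) : List KLetter :=
  ((w.drop 1).set (kiota w - 2) A) ++ [w.getD (kiota w - 1) A]

/-- The trip permutation `σ_w` of a Kreweras word of length `3 * n`, as a function on
1-indexed positions: `σ_w i` is the unique element of `{1, …, 3n}` congruent to
`kiota (pro^[i-1] w) + i - 1` modulo `3 * n`. -/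
def ksigma (n : ℕ) (w : List KLetter) (i : ℕ) : ℕ :=
  (kiota (pro^[i - 1] w) + i - 2) % (3 * n) + 1

/-- `keps w i` is the letter of `pro^[i-1] w` in (1-indexed) position `kiota (pro^[i-1] w)`. -/
def keps (w : List KLetter) (i : ℕ) : KLetter :=
  (pro^[i - 1] w).getD (kiota (pro^[i - 1] w) - 1) A

/-- The negation swapping `B` and `C` (and fixing `A`). -/
def negL : KLetter → KLetter
  | A => A
  | B => C
  | C => B

open Classical in
/-- The involution `τ_i` on Kreweras words of length `3 * n`: swap the letters in
(1-indexed) positions `i` and `i + 1` if the result is again a Kreweras word,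
and otherwise do nothing. -/
noncomputable def tau (n i : ℕ) (w : List KLetter) : List KLetter :=
  let w' := (w.set (i - 1) (w.getD i A)).set i (w.getD (i - 1) A)
  if IsKrewerasWord n w' then w' else w

/-- `tauDown n j = τ_j ∘ τ_{j-1} ∘ ⋯ ∘ τ_1`. -/
noncomputable def tauDown (n : ℕ) : ℕ → List KLetter → List KLetter
  | 0, w => w
  | j + 1, w => tau n (j + 1) (tauDown n j w)

/-- `evacAux n j = (tauDown n 1) ∘ (tauDown n 2) ∘ ⋯ ∘ (tauDown n j)`. -/
noncomputable def evacAux (n : ℕ) : ℕ → List KLetter → List KLetter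
  | 0, w => w
  | j + 1, w => evacAux n j (tauDown n (j + 1) w)

/-- Evacuation on Kreweras words of length `3 * n`:
`evac = (τ_1) ∘ (τ_2 ∘ τ_1) ∘ ⋯ ∘ (τ_{3n-1} ∘ ⋯ ∘ τ_2 ∘ τ_1)`. -/
noncomputable def evac (n : ℕ) (w : List KLetter) : List KLetter :=
  evacAux n (3 * n - 1) w

/-- `tauAsc n k c = τ_{k+c-1} ∘ ⋯ ∘ τ_{k+1} ∘ τ_k`. -/
noncomputable def tauAsc (n k : ℕ) : ℕ → List KLetter → List KLetter
  | 0, w => w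
  | j + 1, w => tau n (k + j) (tauAsc n k j w)

/-- `evacStarAux n j = (tauAsc n 1 (3n-1)) ∘ (tauAsc n 2 (3n-2)) ∘ ⋯ ∘ (tauAsc n j (3n-j))`. -/
noncomputable def evacStarAux (n : ℕ) : ℕ → List KLetter → List KLetter
  | 0, w => w
  | j + 1, w => evacStarAux n j (tauAsc n (j + 1) (3 * n - (j + 1)) w)

/-- Dual evacuation on Kreweras words of length `3 * n`:
`evac* = (τ_{3n-1} ∘ ⋯ ∘ τ_1) ∘ (τ_{3n-1} ∘ ⋯ ∘ τ_2) ∘ ⋯ ∘ (τ_{3n-1})`. -/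
noncomputable def evacStar (n : ℕ) (w : List KLetter) : List KLetter :=
  evacStarAux n (3 * n - 1) w

/-- The three-element "V"-shaped poset: `a < b`, `a < c`, with `b`, `c` incomparable. -/
inductive VP : Type
  | a | b | c
deriving DecidableEq

instance : PartialOrder VP where
  le x y := x = y ∨ x = VP.a
  le_refl x := Or.inl rfl
  le_trans x y z hxy hyz := by
    rcases hxy with rfl | rfl
    · exact hyz
    · exact Or.inr rfl
  le_antisymm x y hxy hyx := by
    rcases hxy with rfl | rfl
    · rfl
    · rcases hyx with rfl | rfl <;> rfl

/-- The labeling of elements of `V(n) = VP × Fin n` by letters. -/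
def vlabel {n : ℕ} (p : VP × Fin n) : KLetter :=
  match p.1 with
  | VP.a => A
  | VP.b => B
  | VP.c => C

/-- `L` is a linear extension of `V(n) = VP × Fin n` (with the product order):
a list of all elements of `V(n)`, each appearing once, such that `L_i ≤ L_j`
implies `i ≤ j`. -/
def IsLinearExtension (n : ℕ) (L : List (VP × Fin n)) : Prop :=
  L.Nodup ∧ (∀ p : VP × Fin n, p ∈ L) ∧
  ∀ i j : Fin L.length, L.get i ≤ L.get j → (i : ℕ) ≤ (j : ℕ)

/-- A connected Kreweras word: a Kreweras word of length `3 * n` having no proper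
nonempty consecutive substring which is itself a Kreweras word. -/
def ConnectedKrewerasWord (n : ℕ) (w : List KLetter) : Prop :=
  IsKrewerasWord n w ∧
  ∀ (u : List KLetter) (m : ℕ), u <:+: w → u ≠ [] → u ≠ w → ¬ IsKrewerasWord m u

/-- Left check of level `i` is passed. -/
def KPassL (lo : ℕ) (P Q : ℕ → ℤ) (s : ℕ) (i : ℤ) : Prop :=
  ∃ k, lo ≤ k ∧ k < s ∧ Q k ≤ Q s - (i + 1) ∧ ∀ m, k < m → m < s → P s - i < P m

/-- Right check of level `i` is passed. -/
def KPassR (hi : ℕ) (P Q : ℕ → ℤ) (s : ℕ) (i : ℤ) : Prop :=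
  ∃ k, s < k ∧ k ≤ hi ∧ P k ≤ P s - i ∧ ∀ m, s < m → m ≤ k → Q s - i < Q m

/-- The trip ends at the left check of level `i`, at position `e = a + 1`. -/
def KEndL (lo : ℕ) (P Q : ℕ → ℤ) (s : ℕ) (i : ℤ) (e : ℕ) : Prop :=
  ∃ a, e = a + 1 ∧ lo ≤ a ∧ a < s ∧ P a ≤ P s - i ∧
    (∀ m, a ≤ m → m < s → Q s - (i + 1) < Q m) ∧ (∀ m, a < m → m < s → P s - i < P m)

/-- The trip ends at the right check of level `i`, at position `e`. -/
def KEndR (hi : ℕ) (P Q : ℕ → ℤ) (s : ℕ) (i : ℤ) (e : ℕ) : Prop :=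
  s < e ∧ e ≤ hi ∧ Q e ≤ Q s - i ∧ (∀ m, s < m → m ≤ e → P s - i < P m) ∧
    (∀ m, s < m → m < e → Q s - i < Q m)

/-- The trip starting at a closer `s` (of type `P`) ends at `e`. -/
def KTrip (lo hi : ℕ) (P Q : ℕ → ℤ) (s e : ℕ) : Prop :=
  ∃ i : ℤ, 0 ≤ i ∧ (∀ j, 0 ≤ j → j < i → KPassL lo P Q s j) ∧
    (((∀ j, 1 ≤ j → j ≤ i → KPassR hi P Q s j) ∧ KEndL lo P Q s i e) ∨
     (1 ≤ i ∧ (∀ j, 1 ≤ j → j < i → KPassR hi P Q s j) ∧ KEndR hi P Q s i e))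

/-- The first return after an opener at `s` is at `e`. -/
def KRet (hi : ℕ) (P Q : ℕ → ℤ) (s e : ℕ) : Prop :=
  P s = P (s - 1) + 1 ∧ Q s = Q (s - 1) + 1 ∧ s < e ∧ e ≤ hi ∧
    (P e ≤ P (s - 1) ∨ Q e ≤ Q (s - 1)) ∧
    ∀ m, s ≤ m → m < e → P (s - 1) < P m ∧ Q (s - 1) < Q m

/-- How the two height functions change under one promotion. -/
structure KStep (lo hi io : ℕ) (U V U' V' : ℕ → ℤ) : Prop where
  h1 : lo + 1 < io
  h2 : io ≤ hi
  ulo : U lo = 0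
  vlo : V lo = 0
  uhi : U hi = 0
  vhi : V hi = 0
  unn : ∀ k, lo ≤ k → k ≤ hi → 0 ≤ U k
  vnn : ∀ k, lo ≤ k → k ≤ hi → 0 ≤ V k
  upos : ∀ k, lo < k → k < io → 1 ≤ U k
  vpos : ∀ k, lo < k → k < io → 1 ≤ V k
  u1 : U (lo + 1) = 1
  v1 : V (lo + 1) = 1
  uio : U io = 0
  uio1 : U (io - 1) = 1
  vio : V io = V (io - 1)
  ul : ∀ k, lo < k → k < io → U' k = U k - 1
  vl : ∀ k, lo < k → k < io → V' k = V k - 1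
  ur : ∀ k, io ≤ k → k ≤ hi → U' k = U k + 1
  vr : ∀ k, io ≤ k → k ≤ hi → V' k = V k
  uend : U' (hi + 1) = 0
  vend : V' (hi + 1) = 0

theorem KRet.symm {hi P Q s e} (h : KRet hi P Q s e) : KRet hi Q P s e := by
  obtain ⟨a, b, c, d, f, g⟩ := h
  exact ⟨b, a, c, d, f.symm, fun m h1 h2 => (g m h1 h2).symm⟩

theorem KStep.ret {lo hi io U V U' V'} (S : KStep lo hi io U V U' V') {s e : ℕ}
    (hs : lo + 1 < s) (hne : s ≠ io) (h : KRet hi U V s e) : KRet (hi + 1) U' V' s e := by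
  obtain ⟨a, b, c, d, f, g⟩ := h
  obtain ⟨h1, h2, ulo, vlo, uhi, vhi, unn, vnn, upos, vpos, u1, v1, uio, uio1, vio, ul, vl, ur, vr, uend, vend⟩ := S
  rcases lt_or_gt_of_ne hne with hlt | hgt
  · have he : e < io := by
      by_contra hc
      have := g (io - 1) (by omega) (by omega)
      have := upos (s - 1) (by omega) (by omega)
      omega
    refine ⟨?_, ?_, c, by omega, ?_, ?_⟩
    · rw [ul s (by omega) (by omega), ul (s-1) (by omega) (by omega)]; omega
    · rw [vl s (by omega) (by omega), vl (s-1) (by omega) (by omega)]; omega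
    · rw [ul e (by omega) (by omega), ul (s-1) (by omega) (by omega), vl e (by omega) (by omega), vl (s-1) (by omega) (by omega)]; omega
    · intro m m1 m2
      have := g m m1 m2
      rw [ul m (by omega) (by omega), ul (s-1) (by omega) (by omega), vl m (by omega) (by omega), vl (s-1) (by omega) (by omega)]; omega
  · refine ⟨?_, ?_, c, by omega, ?_, ?_⟩
    · rw [ur s (by omega) (by omega), ur (s-1) (by omega) (by omega)]; omega
    · rw [vr s (by omega) (by omega), vr (s-1) (by omega) (by omega)]; omega
    · rw [ur e (by omega) (by omega), ur (s-1) (by omega) (by omega), vr e (by omega) (by omega), vr (s-1) (by omega) (by omega)]; omega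
    · intro m m1 m2
      have := g m m1 m2
      rw [ur m (by omega) (by omega), ur (s-1) (by omega) (by omega), vr m (by omega) (by omega), vr (s-1) (by omega) (by omega)]; omega

/-- The closer at `s = io` is turned into an opener. -/
theorem KStep.turn {lo hi io U V U' V'} (S : KStep lo hi io U V U' V') {e : ℕ}
    (h : KTrip lo hi U V io e) : KRet (hi + 1) U' V' io e := by
  obtain ⟨h1, h2, ulo, vlo, uhi, vhi, unn, vnn, upos, vpos, u1, v1, uio, uio1, vio, ul, vl, ur, vr, uend, vend⟩ := S
  obtain ⟨i, i0, hL, h⟩ := h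
  have key : ¬ KPassR hi U V io 1 := by
    rintro ⟨k, k1, k2, k3, -⟩
    have := unn k (by omega) k2
    omega
  have hv := vpos (io - 1) (by omega) (by omega)
  rcases h with ⟨hR, a, rfl, a1, a2, a3, a4, a5⟩ | ⟨i1, hR, e1, e2, e3, e4, e5⟩
  · exfalso
    by_cases hi1 : 1 ≤ i
    · exact key (hR 1 le_rfl hi1)
    · have : i = 0 := by omega
      subst this
      have : a = lo := by
        by_contra hc
        have := upos a (by omega) (by omega)
        omega
      subst this
      have := a4 a le_rfl (by omega)
      omega
  · have : i = 1 := by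
      by_contra hc
      exact key (hR 1 le_rfl (by omega))
    subst this
    refine ⟨?_, ?_, e1, by omega, Or.inr ?_, ?_⟩
    · rw [ur io (by omega) (by omega), ul (io-1) (by omega) (by omega)]; omega
    · rw [vr io (by omega) (by omega), vl (io-1) (by omega) (by omega)]; omega
    · rw [vr e (by omega) (by omega), vl (io-1) (by omega) (by omega)]; omega
    · intro m m1 m2
      rw [ur m (by omega) (by omega), ul (io-1) (by omega) (by omega), vr m (by omega) (by omega), vl (io-1) (by omega) (by omega)]
      have := unn m (by omega) (by omega)
      rcases Nat.eq_or_lt_of_le m1 with rfl | hm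
      · omega
      · have := e5 m hm m2
        omega

/-- The initial trip: the new last letter is matched with `io`. -/
theorem KStep.init {lo hi io U V U' V'} (S : KStep lo hi io U V U' V') :
    KTrip (lo + 1) (hi + 1) U' V' (hi + 1) io := by
  obtain ⟨h1, h2, ulo, vlo, uhi, vhi, unn, vnn, upos, vpos, u1, v1, uio, uio1, vio, ul, vl, ur, vr, uend, vend⟩ := S
  refine ⟨0, le_rfl, fun j _ _ => by omega, Or.inl ⟨fun j _ _ => by omega, io - 1, by omega, by omega, by omega, ?_, ?_, ?_⟩⟩
  · rw [ul (io-1) (by omega) (by omega)]; omega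
  · intro m m1 m2
    rcases lt_or_ge m io with hm | hm
    · rw [vl m (by omega) hm]
      have := vpos m (by omega) hm
      omega
    · rw [vr m hm (by omega)]
      have := vnn m (by omega) (by omega)
      omega
  · intro m m1 m2
    rw [ur m (by omega) (by omega)]
    have := unn m (by omega) (by omega)
    omega

theorem KStep.lt {lo hi io U V U' V'} (S : KStep lo hi io U V U' V') (m : ℕ)
    (h1 : lo < m) (h2 : m < io) :
    U' m = U m - 1 ∧ V' m = V m - 1 ∧ 1 ≤ U m ∧ 1 ≤ V m :=
  ⟨S.ul m h1 h2, S.vl m h1 h2, S.upos m h1 h2, S.vpos m h1 h2⟩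

theorem KStep.ge {lo hi io U V U' V'} (S : KStep lo hi io U V U' V') (m : ℕ)
    (h1 : io ≤ m) (h2 : m ≤ hi) :
    U' m = U m + 1 ∧ V' m = V m ∧ 0 ≤ U m ∧ 0 ≤ V m :=
  ⟨S.ur m h1 h2, S.vr m h1 h2, S.unn m (by have := S.h1; omega) h2,
    S.vnn m (by have := S.h1; omega) h2⟩

theorem KStep.tripA1 {lo hi io U V U' V'} (S : KStep lo hi io U V U' V') {s e : ℕ}
    (hs : lo + 1 < s) (hlt : s < io) (h : KTrip lo hi U V s e) :
    KTrip (lo + 1) (hi + 1) U' V' s e := by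
  have LT := S.lt
  have GE := S.ge
  have h1 := S.h1
  have h2 := S.h2
  have ulo := S.ulo
  have vlo := S.vlo
  have u1 := S.u1
  have v1 := S.v1
  have uio := S.uio
  have uio1 := S.uio1
  have hS := LT s (by omega) (by omega)
  have h0 := LT (lo + 1) (by omega) (by omega)
  have hio1 := LT (io - 1) (by omega) (by omega)
  have hio := GE io (by omega) (by omega)
  have tL0 : ∀ j, j < U s → KPassL lo U V s j →
      ∃ k, lo < k ∧ k < s ∧ V k ≤ V s - (j + 1) ∧ ∀ m, k < m → m < s → U s - j < U m := by
    rintro j hj ⟨k, k1, k2, k3, k4⟩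
    refine ⟨k, ?_, k2, k3, k4⟩
    by_contra hc
    have := k4 (lo + 1) (by omega) (by omega)
    omega
  have tL : ∀ j, j < U s → KPassL lo U V s j → KPassL (lo + 1) U' V' s j := by
    intro j hj h
    obtain ⟨k, k1, k2, k3, k4⟩ := tL0 j hj h
    refine ⟨k, by omega, k2, ?_, ?_⟩
    · have := LT k (by omega) (by omega)
      omega
    · intro m m1 m2
      have := k4 m m1 m2
      have := LT m (by omega) (by omega)
      omega
  have tR : ∀ j, 1 ≤ j → j < U s → KPassR hi U V s j → KPassR (hi + 1) U' V' s j := by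
    rintro j hj1 hj ⟨k, k1, k2, k3, k4⟩
    by_cases hk : k < io
    · refine ⟨k, k1, by omega, ?_, ?_⟩
      · have := LT k (by omega) (by omega)
        omega
      · intro m m1 m2
        have := k4 m m1 m2
        have := LT m (by omega) (by omega)
        omega
    · have hne : s ≠ io - 1 := by
        intro hc
        subst hc
        omega
      refine ⟨io - 1, by omega, by omega, by omega, ?_⟩
      intro m m1 m2
      have := k4 m m1 (by omega)
      have := LT m (by omega) (by omega)
      omega
  obtain ⟨i, i0, hL, h⟩ := h
  rcases h with ⟨hR, a, rfl, a1, a2, a3, a4, a5⟩ | ⟨i1, hR, e1, e2, e3, e4, e5⟩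
  · have hi : i < U s := by
      by_contra hc
      obtain ⟨k, k1, k2, k3, k4⟩ := tL0 (U s - 1) (by omega) (hL (U s - 1) (by omega) (by omega))
      have := LT k (by omega) (by omega)
      have ha : a = lo := by
        by_contra hne
        have := LT a (by omega) (by omega)
        omega
      subst ha
      have := a4 a le_rfl a2
      obtain ⟨q, q1, q2, q3, q4⟩ := hR i (by omega) le_rfl
      have : 0 ≤ U q := S.unn q (by omega) q2
      omega
    have ha : lo < a := by
      by_contra hc
      have := a5 (lo + 1) (by omega) (by omega)
      omega
    refine ⟨i, i0, fun j j1 j2 => tL j (by omega) (hL j j1 j2), Or.inl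
      ⟨fun j j1 j2 => tR j j1 (by omega) (hR j j1 j2), a, rfl, ha, a2, ?_, ?_, ?_⟩⟩
    · have := LT a (by omega) (by omega)
      omega
    · intro m m1 m2
      have := a4 m m1 m2
      have := LT m (by omega) (by omega)
      omega
    · intro m m1 m2
      have := a5 m m1 m2
      have := LT m (by omega) (by omega)
      omega
  · by_cases hi : i ≤ U s
    · have he : e < io := by
        by_contra hc
        have := e4 io (by omega) (by omega)
        omega
      refine ⟨i, i0, fun j j1 j2 => tL j (by omega) (hL j j1 j2), Or.inr
        ⟨i1, fun j j1 j2 => tR j j1 (by omega) (hR j j1 j2), e1, by omega, ?_, ?_, ?_⟩⟩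
      · have := LT e (by omega) (by omega)
        omega
      · intro m m1 m2
        have := e4 m m1 m2
        have := LT m (by omega) (by omega)
        omega
      · intro m m1 m2
        have := e5 m m1 m2
        have := LT m (by omega) (by omega)
        omega
    · have hi' : i = U s + 1 := by
        by_contra hc
        obtain ⟨q, q1, q2, q3, q4⟩ := hR (U s + 1) (by omega) (by omega)
        have : 0 ≤ U q := S.unn q (by omega) q2
        omega
      subst hi'
      obtain ⟨k, k1, k2, k3, k4⟩ := hR (U s) (by omega) (by omega)
      have hk : io ≤ k := by
        by_contra hc
        have := LT k (by omega) (by omega)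
        omega
      have he : k < e := by
        by_contra hc
        have := k4 e (by omega) (by omega)
        omega
      refine ⟨U s, by omega, fun j j1 j2 => tL j (by omega) (hL j j1 (by omega)), Or.inr
        ⟨by omega, fun j j1 j2 => tR j j1 (by omega) (hR j j1 (by omega)), e1, by omega, ?_, ?_, ?_⟩⟩
      · have := GE e (by omega) (by omega)
        omega
      · intro m m1 m2
        rcases lt_or_ge m io with hm | hm
        · have := LT m (by omega) (by omega)
          omega
        · have := GE m (by omega) (by omega)
          omega
      · intro m m1 m2
        rcases lt_or_ge m io with hm | hm
        · have := LT m (by omega) (by omega)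
          have := k4 m m1 (by omega)
          omega
        · have := GE m (by omega) (by omega)
          have := e5 m m1 m2
          omega

theorem KStep.tripA2 {lo hi io U V U' V'} (S : KStep lo hi io U V U' V') {s e : ℕ}
    (hs : lo + 1 < s) (hlt : s < io) (h : KTrip lo hi V U s e) :
    KTrip (lo + 1) (hi + 1) V' U' s e := by
  have LT := S.lt
  have GE := S.ge
  have h1 := S.h1
  have h2 := S.h2
  have ulo := S.ulo
  have vlo := S.vlo
  have u1 := S.u1
  have v1 := S.v1
  have uio := S.uio
  have uio1 := S.uio1
  have hS := LT s (by omega) (by omega)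
  have h0 := LT (lo + 1) (by omega) (by omega)
  have hio1 := LT (io - 1) (by omega) (by omega)
  have hio := GE io (by omega) (by omega)
  have tL0 : ∀ j, j < V s → KPassL lo V U s j →
      ∃ k, lo < k ∧ k < s ∧ U k ≤ U s - (j + 1) ∧ ∀ m, k < m → m < s → V s - j < V m := by
    rintro j hj ⟨k, k1, k2, k3, k4⟩
    refine ⟨k, ?_, k2, k3, k4⟩
    by_contra hc
    have := k4 (lo + 1) (by omega) (by omega)
    omega
  have tL : ∀ j, j < V s → KPassL lo V U s j → KPassL (lo + 1) V' U' s j := by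
    intro j hj h
    obtain ⟨k, k1, k2, k3, k4⟩ := tL0 j hj h
    refine ⟨k, by omega, k2, ?_, ?_⟩
    · have := LT k (by omega) (by omega)
      omega
    · intro m m1 m2
      have := k4 m m1 m2
      have := LT m (by omega) (by omega)
      omega
  have tR : ∀ j, 1 ≤ j → j ≤ U s → KPassR hi V U s j → KPassR (hi + 1) V' U' s j := by
    rintro j hj1 hj ⟨k, k1, k2, k3, k4⟩
    have hk : k < io := by
      by_contra hc
      have := k4 io (by omega) (by omega)
      omega
    refine ⟨k, k1, by omega, ?_, ?_⟩
    · have := LT k (by omega) (by omega)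
      omega
    · intro m m1 m2
      have := k4 m m1 m2
      have := LT m (by omega) (by omega)
      omega
  have bad : KPassR hi V U s (V s) → (U s < V s → KPassL lo V U s (U s)) → False := by
    rintro ⟨k, k1, k2, k3, k4⟩ hl
    have hk : io ≤ k := by
      by_contra hc
      have := LT k (by omega) (by omega)
      omega
    have := k4 io (by omega) (by omega)
    obtain ⟨q, q1, q2, q3, q4⟩ := hl (by omega)
    have : 0 ≤ U q := S.unn q (by omega) (by omega)
    omega
  obtain ⟨i, i0, hL, h⟩ := h
  have hiU : i ≤ U s := by
    by_contra hc
    obtain ⟨q, q1, q2, q3, q4⟩ := hL (i - 1) (by omega) (by omega)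
    have : 0 ≤ U q := S.unn q (by omega) (by omega)
    omega
  rcases h with ⟨hR, a, rfl, a1, a2, a3, a4, a5⟩ | ⟨i1, hR, e1, e2, e3, e4, e5⟩
  · have hi : i < V s := by
      by_contra hc
      exact bad (hR (V s) (by omega) (by omega)) (fun _ => hL (U s) (by omega) (by omega))
    have ha : lo < a := by
      by_contra hc
      have := a5 (lo + 1) (by omega) (by omega)
      omega
    refine ⟨i, i0, fun j j1 j2 => tL j (by omega) (hL j j1 j2), Or.inl
      ⟨fun j j1 j2 => tR j j1 (by omega) (hR j j1 j2), a, rfl, ha, a2, ?_, ?_, ?_⟩⟩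
    · have := LT a (by omega) (by omega)
      omega
    · intro m m1 m2
      have := a4 m m1 m2
      have := LT m (by omega) (by omega)
      omega
    · intro m m1 m2
      have := a5 m m1 m2
      have := LT m (by omega) (by omega)
      omega
  · have hi : i ≤ V s := by
      by_contra hc
      exact bad (hR (V s) (by omega) (by omega)) (fun _ => hL (U s) (by omega) (by omega))
    have hiU' : i < U s := by
      obtain ⟨k, k1, k2, k3, k4⟩ := tL0 (i - 1) (by omega) (hL (i - 1) (by omega) (by omega))
      have := LT k (by omega) (by omega)
      omega
    have hne : s ≠ io - 1 := by
      intro hc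
      subst hc
      omega
    have he : e < io := by
      by_contra hc
      have := e5 (io - 1) (by omega) (by omega)
      omega
    refine ⟨i, i0, fun j j1 j2 => tL j (by omega) (hL j j1 j2), Or.inr
      ⟨i1, fun j j1 j2 => tR j j1 (by omega) (hR j j1 j2), e1, by omega, ?_, ?_, ?_⟩⟩
    · have := LT e (by omega) (by omega)
      omega
    · intro m m1 m2
      have := e4 m m1 m2
      have := LT m (by omega) (by omega)
      omega
    · intro m m1 m2
      have := e5 m m1 m2
      have := LT m (by omega) (by omega)
      omega

theorem KStep.tripB1 {lo hi io U V U' V'} (S : KStep lo hi io U V U' V') {s e : ℕ}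
    (hlt : io < s) (hsh : s ≤ hi) (h : KTrip lo hi U V s e) :
    KTrip (lo + 1) (hi + 1) U' V' s e := by
  have GE := S.ge
  have h1 := S.h1
  have h2 := S.h2
  have uio := S.uio
  have hS := GE s (by omega) (by omega)
  have hio := GE io (by omega) (by omega)
  have tL : ∀ j, j ≤ U s → KPassL lo U V s j → KPassL (lo + 1) U' V' s j := by
    rintro j hj ⟨k, k1, k2, k3, k4⟩
    have hk : io ≤ k := by
      by_contra hc
      have := k4 io (by omega) (by omega)
      omega
    refine ⟨k, by omega, k2, ?_, ?_⟩
    · have := GE k (by omega) (by omega)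
      omega
    · intro m m1 m2
      have := k4 m m1 m2
      have := GE m (by omega) (by omega)
      omega
  have tR : ∀ j, KPassR hi U V s j → KPassR (hi + 1) U' V' s j := by
    rintro j ⟨k, k1, k2, k3, k4⟩
    refine ⟨k, k1, by omega, ?_, ?_⟩
    · have := GE k (by omega) (by omega)
      omega
    · intro m m1 m2
      have := k4 m m1 m2
      have := GE m (by omega) (by omega)
      omega
  have bR : ∀ j, KPassR hi U V s j → j ≤ U s := by
    rintro j ⟨k, k1, k2, k3, k4⟩
    have := GE k (by omega) (by omega)
    omega
  obtain ⟨i, i0, hL, h⟩ := h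
  rcases h with ⟨hR, a, rfl, a1, a2, a3, a4, a5⟩ | ⟨i1, hR, e1, e2, e3, e4, e5⟩
  · have hi : i ≤ U s := by
      by_contra hc
      have := bR i (hR i (by omega) le_rfl)
      omega
    have ha : io ≤ a := by
      by_contra hc
      have := a5 io (by omega) (by omega)
      omega
    refine ⟨i, i0, fun j j1 j2 => tL j (by omega) (hL j j1 j2), Or.inl
      ⟨fun j j1 j2 => tR j (hR j j1 j2), a, rfl, by omega, a2, ?_, ?_, ?_⟩⟩
    · have := GE a (by omega) (by omega)
      omega
    · intro m m1 m2
      have := a4 m m1 m2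
      have := GE m (by omega) (by omega)
      omega
    · intro m m1 m2
      have := a5 m m1 m2
      have := GE m (by omega) (by omega)
      omega
  · have hi : i ≤ U s + 1 := by
      by_contra hc
      have := bR (i - 1) (hR (i - 1) (by omega) (by omega))
      omega
    refine ⟨i, i0, fun j j1 j2 => tL j (by omega) (hL j j1 j2), Or.inr
      ⟨i1, fun j j1 j2 => tR j (hR j j1 j2), e1, by omega, ?_, ?_, ?_⟩⟩
    · have := GE e (by omega) (by omega)
      omega
    · intro m m1 m2
      have := e4 m m1 m2
      have := GE m (by omega) (by omega)
      omega
    · intro m m1 m2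
      have := e5 m m1 m2
      have := GE m (by omega) (by omega)
      omega

theorem KStep.tripB2 {lo hi io U V U' V'} (S : KStep lo hi io U V U' V') {s e : ℕ}
    (hlt : io < s) (hsh : s ≤ hi) (h : KTrip lo hi V U s e) :
    KTrip (lo + 1) (hi + 1) V' U' s e ∨
      (e = lo + 1 ∧ KTrip (lo + 1) (hi + 1) V' U' s (hi + 1)) := by
  have LT := S.lt
  have GE := S.ge
  have h1 := S.h1
  have h2 := S.h2
  have uio := S.uio
  have uio1 := S.uio1
  have v1 := S.v1
  have vlo := S.vlo
  have vhi := S.vhi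
  have uend := S.uend
  have hS := GE s (by omega) (by omega)
  have hio := GE io (by omega) (by omega)
  have hio1 := LT (io - 1) (by omega) (by omega)
  have tL : ∀ j, KPassL lo V U s j → KPassL (lo + 1) V' U' s j := by
    rintro j ⟨k, k1, k2, k3, k4⟩
    rcases lt_or_ge k io with hk | hk
    · have : 0 ≤ U k := S.unn k (by omega) (by omega)
      refine ⟨io, by omega, hlt, by omega, ?_⟩
      intro m m1 m2
      have := k4 m (by omega) m2
      have := GE m (by omega) (by omega)
      omega
    · refine ⟨k, by omega, k2, ?_, ?_⟩
      · have := GE k (by omega) (by omega)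
        omega
      · intro m m1 m2
        have := k4 m m1 m2
        have := GE m (by omega) (by omega)
        omega
  have tR : ∀ j, KPassR hi V U s j → KPassR (hi + 1) V' U' s j := by
    rintro j ⟨k, k1, k2, k3, k4⟩
    refine ⟨k, k1, by omega, ?_, ?_⟩
    · have := GE k (by omega) (by omega)
      omega
    · intro m m1 m2
      have := k4 m m1 m2
      have := GE m (by omega) (by omega)
      omega
  obtain ⟨i, i0, hL, h⟩ := h
  rcases h with ⟨hR, a, rfl, a1, a2, a3, a4, a5⟩ | ⟨i1, hR, e1, e2, e3, e4, e5⟩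
  · rcases lt_or_ge a io with ha | ha
    · have hiU : i = U s := by
        have := a4 io (by omega) hlt
        by_contra hc
        obtain ⟨q, q1, q2, q3, q4⟩ := hL (i - 1) (by omega) (by omega)
        have : 0 ≤ U q := S.unn q (by omega) (by omega)
        omega
      have pL : KPassL (lo + 1) V' U' s i := by
        refine ⟨io - 1, by omega, by omega, by omega, ?_⟩
        intro m m1 m2
        have := a5 m (by omega) m2
        have := GE m (by omega) (by omega)
        omega
      have pL' : ∀ j, 0 ≤ j → j < i + 1 → KPassL (lo + 1) V' U' s j := by
        intro j j1 j2
        by_cases hj : j = i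
        · rw [hj]; exact pL
        · exact tL j (hL j j1 (by omega))
      rcases lt_or_ge (U s) (V s) with hUV | hUV
      · left
        have hne : s ≠ hi := by
          intro hc
          subst hc
          omega
        have ha' : lo < a := by
          by_contra hc
          have := a5 (lo + 1) (by omega) (by omega)
          omega
        refine ⟨i + 1, by omega, pL', Or.inl ⟨?_, a, rfl, by omega, a2, ?_, ?_, ?_⟩⟩
        · intro j j1 j2
          by_cases hj : j = i + 1
          · subst hj
            refine ⟨hi, by omega, by omega, ?_, ?_⟩
            · have := GE hi (by omega) (by omega)
              omega
            · intro m m1 m2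
              have := GE m (by omega) (by omega)
              omega
          · exact tR j (hR j j1 (by omega))
        · have := LT a (by omega) (by omega)
          omega
        · intro m m1 m2
          rcases lt_or_ge m io with hm | hm
          · have := LT m (by omega) (by omega)
            omega
          · have := GE m (by omega) (by omega)
            omega
        · intro m m1 m2
          have := a5 m m1 m2
          rcases lt_or_ge m io with hm | hm
          · have := LT m (by omega) (by omega)
            omega
          · have := GE m (by omega) (by omega)
            omega
      · right
        have hVU : V s = U s := by
          by_contra hc
          obtain ⟨q, q1, q2, q3, q4⟩ := hR i (by omega) le_rfl
          have := GE q (by omega) (by omega)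
          omega
        have ha' : a = lo := by
          by_contra hc
          have := LT a (by omega) (by omega)
          omega
        refine ⟨by omega, i + 1, by omega, pL', Or.inr ⟨by omega,
          fun j j1 j2 => tR j (hR j j1 (by omega)), by omega, le_rfl, by omega, ?_, ?_⟩⟩
        · intro m m1 m2
          by_cases hm : m = hi + 1
          · subst hm
            have := S.vend
            omega
          · have := GE m (by omega) (by omega)
            omega
        · intro m m1 m2
          have := GE m (by omega) (by omega)
          omega
    · left
      refine ⟨i, i0, fun j j1 j2 => tL j (hL j j1 j2), Or.inl
        ⟨fun j j1 j2 => tR j (hR j j1 j2), a, rfl, by omega, a2, ?_, ?_, ?_⟩⟩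
      · have := GE a (by omega) (by omega)
        omega
      · intro m m1 m2
        have := a4 m m1 m2
        have := GE m (by omega) (by omega)
        omega
      · intro m m1 m2
        have := a5 m m1 m2
        have := GE m (by omega) (by omega)
        omega
  · left
    refine ⟨i, i0, fun j j1 j2 => tL j (hL j j1 j2), Or.inr
      ⟨i1, fun j j1 j2 => tR j (hR j j1 j2), e1, by omega, ?_, ?_, ?_⟩⟩
    · have := GE e (by omega) (by omega)
      omega
    · intro m m1 m2
      have := e4 m m1 m2
      have := GE m (by omega) (by omega)
      omega
    · intro m m1 m2
      have := e5 m m1 m2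
      have := GE m (by omega) (by omega)
      omega

/-- The invariant attached to the position `s`. -/
def KInv (lo hi : ℕ) (x y : ℕ → ℤ) (s e : ℕ) : Prop :=
  (x s = x (s - 1) - 1 ∧ y s = y (s - 1) ∧ KTrip lo hi x y s e) ∨
  (y s = y (s - 1) - 1 ∧ x s = x (s - 1) ∧ KTrip lo hi y x s e) ∨ KRet hi x y s e

theorem KInv.symm {lo hi x y s e} (h : KInv lo hi x y s e) : KInv lo hi y x s e := by
  rcases h with h | h | h
  · exact Or.inr (Or.inl h)
  · exact Or.inl h
  · exact Or.inr (Or.inr h.symm)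

theorem KStep.inv {lo hi io U V U' V'} (S : KStep lo hi io U V U' V') {s e : ℕ}
    (hs : lo + 1 < s) (hsh : s ≤ hi) (h : KInv lo hi U V s e) :
    ∃ e', KInv (lo + 1) (hi + 1) U' V' s e' ∧ (e' = e ∨ (e = lo + 1 ∧ e' = hi + 1)) := by
  have h1 := S.h1
  have h2 := S.h2
  by_cases hio : s = io
  · subst hio
    have := S.uio
    have := S.uio1
    have := S.vio
    rcases h with ⟨a, b, c⟩ | ⟨a, b, c⟩ | h
    · exact ⟨e, Or.inr (Or.inr (S.turn c)), Or.inl rfl⟩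
    · omega
    · have := h.1
      omega
  · rcases h with ⟨a, b, c⟩ | ⟨a, b, c⟩ | h
    · rcases lt_or_gt_of_ne hio with hlt | hlt
      · refine ⟨e, Or.inl ⟨?_, ?_, S.tripA1 hs hlt c⟩, Or.inl rfl⟩
        all_goals
          have := S.lt s (by omega) (by omega)
          have := S.lt (s - 1) (by omega) (by omega)
          omega
      · refine ⟨e, Or.inl ⟨?_, ?_, S.tripB1 hlt hsh c⟩, Or.inl rfl⟩
        all_goals
          have := S.ge s (by omega) (by omega)
          have := S.ge (s - 1) (by omega) (by omega)
          omega
    · rcases lt_or_gt_of_ne hio with hlt | hlt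
      · refine ⟨e, Or.inr (Or.inl ⟨?_, ?_, S.tripA2 hs hlt c⟩), Or.inl rfl⟩
        all_goals
          have := S.lt s (by omega) (by omega)
          have := S.lt (s - 1) (by omega) (by omega)
          omega
      · rcases S.tripB2 hlt hsh c with hc | ⟨he, hc⟩
        · refine ⟨e, Or.inr (Or.inl ⟨?_, ?_, hc⟩), Or.inl rfl⟩
          all_goals
            have := S.ge s (by omega) (by omega)
            have := S.ge (s - 1) (by omega) (by omega)
            omega
        · refine ⟨hi + 1, Or.inr (Or.inl ⟨?_, ?_, hc⟩), Or.inr ⟨he, rfl⟩⟩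
          all_goals
            have := S.ge s (by omega) (by omega)
            have := S.ge (s - 1) (by omega) (by omega)
            omega
    · exact ⟨e, Or.inr (Or.inr (S.ret hs hio h)), Or.inl rfl⟩

/-- Height function of a word with respect to the letter `X`. -/
def kpx (X : KLetter) (w : List KLetter) (k : ℕ) : ℤ :=
  ((w.take k).count A : ℤ) - ((w.take k).count X : ℤ)

/-- Height change of a letter. -/
def kstp (X l : KLetter) : ℤ := (if l = A then 1 else 0) - (if l = X then 1 else 0)

theorem kpx_zero (X w) : kpx X w 0 = 0 := by simp [kpx]

theorem kpx_succ (X : KLetter) (w : List KLetter) (k : ℕ) (hk : k < w.length) :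
    kpx X w (k + 1) = kpx X w k + kstp X (w.getD k A) := by
  have h : w.take (k + 1) = w.take k ++ [w.getD k A] := by
    rw [List.take_add_one, List.getD_eq_getElem _ _ hk, List.getElem?_eq_getElem hk]
    rfl
  unfold kpx kstp
  rw [h, List.count_append, List.count_append, List.count_singleton, List.count_singleton]
  simp only [beq_iff_eq]
  push_cast
  ring

/-- Kreweras words in terms of heights. -/
structure KW (N : ℕ) (w : List KLetter) : Prop where
  len : w.length = N
  nn : ∀ X, X ≠ A → ∀ k, k ≤ N → 0 ≤ kpx X w k
  fin : ∀ X, X ≠ A → kpx X w N = 0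

theorem IsKrewerasWord.kw {n w} (h : IsKrewerasWord n w) : KW (3 * n) w := by
  obtain ⟨h1, h2, h3, h4, h5⟩ := h
  refine ⟨h1, ?_, ?_⟩
  · intro X hX k _
    have := h5 k
    unfold kpx
    cases X
    · exact absurd rfl hX
    · omega
    · omega
  · intro X hX
    unfold kpx
    rw [← h1, List.take_length]
    cases X
    · exact absurd rfl hX
    · omega
    · omega

theorem khead (p : ℕ → Bool) (m : ℕ) (h : ∃ k, k < m ∧ p k = true) :
    ((List.range m).filter p).headD 0 < m ∧ p (((List.range m).filter p).headD 0) = true ∧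
      ∀ j, j < ((List.range m).filter p).headD 0 → p j = false := by
  have hs : ((List.range m).filter p).Pairwise (· < ·) := List.pairwise_lt_range.filter p
  have hmem : ∀ j, j ∈ (List.range m).filter p ↔ j < m ∧ p j = true := by
    intro j; simp
  generalize (List.range m).filter p = l at hs hmem
  cases l with
  | nil =>
    obtain ⟨k, hk⟩ := h
    have := (hmem k).2 hk
    simp at this
  | cons a l =>
    have ha := (hmem a).1 (by simp)
    refine ⟨ha.1, ha.2, ?_⟩
    intro j hj
    simp only [List.headD_cons] at hj
    by_contra hc
    have hjm := (hmem j).2 ⟨by omega, by simpa using hc⟩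
    rw [List.mem_cons] at hjm
    rcases hjm with rfl | hjm
    · omega
    · have := (List.pairwise_cons.1 hs).1 j hjm
      omega

theorem KW.iota {N w} (h : KW N w) (hN : 1 ≤ N) :
    2 ≤ kiota w ∧ kiota w ≤ N ∧ (∃ X, X ≠ A ∧ kpx X w (kiota w) = 0) ∧
      (∀ k, 1 ≤ k → k < kiota w → ∀ X, X ≠ A → 1 ≤ kpx X w k) ∧ w.getD 0 A = A := by
  have hA : w.getD 0 A = A := by
    have hb := kpx_succ B w 0 (by rw [h.len]; omega)
    have hc := kpx_succ C w 0 (by rw [h.len]; omega)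
    have hb' := h.nn B (by decide) 1 hN
    have hc' := h.nn C (by decide) 1 hN
    rw [kpx_zero] at hb hc
    simp only [zero_add] at hb hc
    rw [hb] at hb'
    rw [hc] at hc'
    cases hl : w.getD 0 A
    · rfl
    · rw [hl] at hb'; simp [kstp] at hb'
    · rw [hl] at hc'; simp [kstp] at hc'
  have key := khead (fun k =>
      decide (1 ≤ k) &&
      (((w.take k).count A == (w.take k).count B) ||
       ((w.take k).count A == (w.take k).count C))) (w.length + 1) (by
        refine ⟨N, by rw [h.len]; omega, ?_⟩
        have := h.fin B (by decide)
        unfold kpx at this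
        simp only [Bool.and_eq_true, Bool.or_eq_true, decide_eq_true_eq, beq_iff_eq]
        refine ⟨hN, Or.inl (by omega)⟩)
  change kiota w < _ ∧ _ ∧ ∀ j, j < kiota w → _ at key
  obtain ⟨k1, k2, k3⟩ := key
  change (decide (1 ≤ kiota w) &&
      (((w.take (kiota w)).count A == (w.take (kiota w)).count B) ||
       ((w.take (kiota w)).count A == (w.take (kiota w)).count C))) = true at k2
  rw [h.len] at k1
  simp only [Bool.and_eq_true, Bool.or_eq_true, decide_eq_true_eq, beq_iff_eq] at k2
  obtain ⟨k2, k4⟩ := k2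
  have hX : ∃ X, X ≠ A ∧ kpx X w (kiota w) = 0 := by
    rcases k4 with k4 | k4
    · exact ⟨B, by decide, by unfold kpx; omega⟩
    · exact ⟨C, by decide, by unfold kpx; omega⟩
  refine ⟨?_, by omega, hX, ?_, hA⟩
  · by_contra hc
    have h1 : kiota w = 1 := by omega
    obtain ⟨X, hX, hX'⟩ := hX
    rw [h1] at hX'
    have := kpx_succ X w 0 (by rw [h.len]; omega)
    rw [hA, kpx_zero] at this
    simp only [zero_add] at this
    rw [hX'] at this
    cases X
    · exact hX rfl
    · simp [kstp] at this
    · simp [kstp] at this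
  · intro k hk1 hk2 X hX
    have h0 := h.nn X hX k (by omega)
    have h3 := k3 k hk2
    simp only [Bool.and_eq_false_iff, Bool.or_eq_false_iff, decide_eq_false_iff_not, beq_eq_false_iff_ne] at h3
    by_contra hc
    have h00 : kpx X w k = 0 := by omega
    unfold kpx at h00
    cases X
    · exact hX rfl
    · omega
    · omega

theorem pro_length {N w} (hw : w.length = N) (hN : 1 ≤ N) : (pro w).length = N := by
  simp [pro, hw]; omega

theorem pro_getD {N w} (hw : w.length = N) (hi2 : 2 ≤ kiota w) (hiN : kiota w ≤ N) (k : ℕ) (hk : k < N) :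
    (pro w).getD k A = if k + 2 = kiota w then A else if k + 1 < N then w.getD (k + 1) A
      else w.getD (kiota w - 1) A := by
  unfold pro
  have hl : ((w.drop 1).set (kiota w - 2) A).length = N - 1 := by simp [hw]
  by_cases h1 : k + 1 < N
  · rw [List.getD_append _ _ _ _ (by omega)]
    rw [List.getD_eq_getElem _ _ (by omega), List.getElem_set]
    by_cases h2 : k + 2 = kiota w
    · rw [if_pos (by omega), if_pos h2]
    · rw [if_neg (by omega), if_neg h2, if_pos h1, List.getElem_drop, List.getD_eq_getElem _ _ (by omega)]
      congr 1
      omega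
  · rw [List.getD_append_right _ _ _ _ (by omega), if_neg (by omega), if_neg h1, hl]
    have : k - (N - 1) = 0 := by omega
    rw [this]
    rfl

theorem KW.main {N w} (h : KW N w) (hN : 1 ≤ N) :
    KW N (pro w) ∧ ∃ X Y, X ≠ A ∧ Y ≠ A ∧ X ≠ Y ∧ w.getD (kiota w - 1) A = X ∧
      kpx X w (kiota w) = 0 ∧ kpx X w (kiota w - 1) = 1 ∧ kpx Y w (kiota w) = kpx Y w (kiota w - 1) ∧
      (∀ k, 1 ≤ k → k < kiota w → ∀ Z, Z ≠ A → kpx Z (pro w) (k - 1) = kpx Z w k - 1) ∧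
      (∀ k, kiota w ≤ k → k ≤ N → kpx X (pro w) (k - 1) = kpx X w k + 1 ∧
        kpx Y (pro w) (k - 1) = kpx Y w k) := by
  obtain ⟨i2, iN, ⟨X, hX, hX0⟩, hpos, hA⟩ := h.iota hN
  have hlen := pro_length h.len hN
  have g := pro_getD h.len i2 iN
  obtain ⟨Y, hY, hXY⟩ : ∃ Y, Y ≠ A ∧ X ≠ Y := by
    cases X
    · exact absurd rfl hX
    · exact ⟨C, by decide, by decide⟩
    · exact ⟨B, by decide, by decide⟩
  have e1 : kiota w - 1 + 1 = kiota w := by omega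
  have sX := kpx_succ X w (kiota w - 1) (by rw [h.len]; omega)
  have sY := kpx_succ Y w (kiota w - 1) (by rw [h.len]; omega)
  have hXp := hpos (kiota w - 1) (by omega) (by omega) X hX
  rw [e1] at sX sY
  have hl : w.getD (kiota w - 1) A = X := by
    rw [hX0] at sX
    generalize w.getD (kiota w - 1) A = l at sX
    by_contra hc
    unfold kstp at sX
    rw [if_neg hc] at sX
    split_ifs at sX <;> omega
  have stXX : kstp X X = -1 := by simp [kstp, hX]
  have stYX : kstp Y X = 0 := by simp [kstp, hX, hXY]
  have stA : ∀ Z, Z ≠ A → kstp Z A = 1 := by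
    intro Z hZ
    simp [kstp, Ne.symm hZ]
  rw [hl] at sX sY
  have fst : ∀ Z, Z ≠ A → kpx Z w 1 = 1 := by
    intro Z hZ
    have := kpx_succ Z w 0 (by rw [h.len]; omega)
    rw [kpx_zero, hA, stA Z hZ] at this
    simpa using this
  have left : ∀ k, 1 ≤ k → k < kiota w → ∀ Z, Z ≠ A → kpx Z (pro w) (k - 1) = kpx Z w k - 1 := by
    intro k hk
    induction k, hk using Nat.le_induction with
    | base => intro _ Z hZ; rw [fst Z hZ]; simp [kpx_zero]
    | succ k hk ih =>
      intro hk2 Z hZ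
      have ih := ih (by omega) Z hZ
      have a1 := kpx_succ Z w k (by rw [h.len]; omega)
      have a2 := kpx_succ Z (pro w) (k - 1) (by rw [hlen]; omega)
      rw [g (k - 1) (by omega), if_neg (by omega), if_pos (by omega)] at a2
      have e : k - 1 + 1 = k := by omega
      rw [e] at a2
      rw [Nat.add_sub_cancel, a2, a1, ih]
      ring
  have right : ∀ k, kiota w ≤ k → k ≤ N → kpx X (pro w) (k - 1) = kpx X w k + 1 ∧
        kpx Y (pro w) (k - 1) = kpx Y w k := by
    intro k hk
    induction k, hk using Nat.le_induction with
    | base =>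
      intro _
      have a : ∀ Z, Z ≠ A → kpx Z (pro w) (kiota w - 1) = kpx Z w (kiota w - 1) := by
        intro Z hZ
        have a2 := kpx_succ Z (pro w) (kiota w - 2) (by rw [hlen]; omega)
        rw [g (kiota w - 2) (by omega), if_pos (by omega), stA Z hZ] at a2
        have a3 := left (kiota w - 1) (by omega) (by omega) Z hZ
        have e : kiota w - 2 + 1 = kiota w - 1 := by omega
        have e' : kiota w - 1 - 1 = kiota w - 2 := by omega
        rw [e] at a2
        rw [e'] at a3
        omega
      have := a X hX
      have := a Y hY
      omega
    | succ k hk ih =>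
      intro hk2
      have ih := ih (by omega)
      have a : ∀ Z, Z ≠ A → kpx Z (pro w) k = kpx Z (pro w) (k - 1) + (kpx Z w (k + 1) - kpx Z w k) := by
        intro Z hZ
        have a1 := kpx_succ Z w k (by rw [h.len]; omega)
        have a2 := kpx_succ Z (pro w) (k - 1) (by rw [hlen]; omega)
        rw [g (k - 1) (by omega), if_neg (by omega), if_pos (by omega)] at a2
        have e : k - 1 + 1 = k := by omega
        rw [e] at a2
        omega
      have := a X hX
      have := a Y hY
      rw [Nat.add_sub_cancel]
      omega
  have hXfin := h.fin X hX
  have hYfin := h.fin Y hY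
  have lastr := right N iN le_rfl
  have eN : N - 1 + 1 = N := by omega
  have fin' : ∀ Z, Z ≠ A → kpx Z (pro w) N = kpx Z (pro w) (N - 1) + kstp Z X := by
    intro Z hZ
    have a2 := kpx_succ Z (pro w) (N - 1) (by rw [hlen]; omega)
    rw [g (N - 1) (by omega), if_neg (by omega), if_neg (by omega), hl, eN] at a2
    exact a2
  have finX := fin' X hX
  have finY := fin' Y hY
  have two : ∀ Z, Z ≠ A → Z = X ∨ Z = Y := by
    intro Z hZ
    revert hX hY hZ hXY
    cases X <;> cases Y <;> cases Z <;> simp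
  refine ⟨⟨hlen, ?_, ?_⟩, X, Y, hX, hY, hXY, hl, hX0, by omega, by omega, left, right⟩
  · intro Z hZ k hk
    by_cases hkN : k = N
    · subst hkN
      rcases two Z hZ with rfl | rfl <;> omega
    · by_cases hki : k + 1 < kiota w
      · have := left (k + 1) (by omega) hki Z hZ
        have := hpos (k + 1) (by omega) hki Z hZ
        rw [Nat.add_sub_cancel] at *
        omega
      · have r := right (k + 1) (by omega) (by omega)
        have := h.nn Z hZ (k + 1) (by omega)
        rw [Nat.add_sub_cancel] at r
        rcases two Z hZ with rfl | rfl <;> omega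
  · intro Z hZ
    rcases two Z hZ with rfl | rfl <;> omega

/-- Heights of the `t`-th promotion, at absolute positions. -/
def kG (w : List KLetter) (X : KLetter) (t k : ℕ) : ℤ := kpx X (pro^[t] w) (k - t)

/-- Letters of the `t`-th promotion, at absolute (1-indexed) positions. -/
def kL (w : List KLetter) (t k : ℕ) : KLetter := (pro^[t] w).getD (k - 1 - t) A

theorem KW.iter {N w} (h : KW N w) (hN : 1 ≤ N) (t : ℕ) : KW N (pro^[t] w) := by
  induction t with
  | zero => exact h
  | succ t ih =>
    rw [Function.iterate_succ_apply']
    exact (ih.main hN).1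

theorem KW.step {N w} (h : KW N w) (hN : 1 ≤ N) (t : ℕ) :
    ∃ X Y, X ≠ A ∧ Y ≠ A ∧ X ≠ Y ∧ kL w t (t + kiota (pro^[t] w)) = X ∧
      KStep t (t + N) (t + kiota (pro^[t] w)) (kG w X t) (kG w Y t)
        (kG w X (t + 1)) (kG w Y (t + 1)) := by
  have hW := h.iter hN t
  obtain ⟨i2, iN, -, ipos, i0⟩ := hW.iota hN
  obtain ⟨hP, X, Y, hX, hY, hXY, hl, x0, x1, y1, hlow, hhigh⟩ := hW.main hN
  have hG : ∀ Z k, kG w Z (t + 1) k = kpx Z (pro (pro^[t] w)) (k - t - 1) := by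
    intro Z k
    rw [kG, Function.iterate_succ_apply', Nat.sub_add_eq]
  set u := pro^[t] w with hu
  have hfst : ∀ Z, Z ≠ A → kpx Z u 1 = 1 := by
    intro Z hZ
    rw [kpx_succ Z u 0 (by rw [hW.len]; omega), kpx_zero, i0]
    simp [kstp, hZ.symm]
  have hg : ∀ Z k, kG w Z t k = kpx Z u (k - t) := fun Z k => rfl
  refine ⟨X, Y, hX, hY, hXY, ?_, ?_⟩
  · rw [kL, ← hl, ← hu]; congr 1; omega
  · constructor
    · omega
    · omega
    · rw [hg, Nat.sub_self, kpx_zero]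
    · rw [hg, Nat.sub_self, kpx_zero]
    · rw [hg, Nat.add_sub_cancel_left, hW.fin X hX]
    · rw [hg, Nat.add_sub_cancel_left, hW.fin Y hY]
    · intro k _ _; rw [hg]; exact hW.nn X hX _ (by omega)
    · intro k _ _; rw [hg]; exact hW.nn Y hY _ (by omega)
    · intro k _ _; rw [hg]; exact ipos _ (by omega) (by omega) X hX
    · intro k _ _; rw [hg]; exact ipos _ (by omega) (by omega) Y hY
    · rw [hg, Nat.add_sub_cancel_left]; exact hfst X hX
    · rw [hg, Nat.add_sub_cancel_left]; exact hfst Y hY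
    · rw [hg, Nat.add_sub_cancel_left, x0]
    · rw [hg, show t + kiota u - 1 - t = kiota u - 1 by omega, x1]
    · rw [hg, hg, show t + kiota u - 1 - t = kiota u - 1 by omega, Nat.add_sub_cancel_left, y1]
    · intro k _ _; rw [hG, hg]; exact hlow _ (by omega) (by omega) X hX
    · intro k _ _; rw [hG, hg]; exact hlow _ (by omega) (by omega) Y hY
    · intro k _ _; rw [hG, hg]; exact (hhigh _ (by omega) (by omega)).1
    · intro k _ _; rw [hG, hg]; exact (hhigh _ (by omega) (by omega)).2
    · rw [hG, show t + N + 1 - t - 1 = N by omega, hP.fin X hX]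
    · rw [hG, show t + N + 1 - t - 1 = N by omega, hP.fin Y hY]

theorem KW.first {N w} (h : KW N w) (hN : 1 ≤ N) (t : ℕ) : kL w t (t + 1) = A := by
  have := ((h.iter hN t).iota hN).2.2.2.2
  simpa [kL] using this

theorem KW.kL_succ {N w} (h : KW N w) (hN : 1 ≤ N) (t k : ℕ) (h1 : t + 1 < k) (h2 : k ≤ t + N) :
    kL w (t + 1) k = if k = t + kiota (pro^[t] w) then A else kL w t k := by
  have hW := h.iter hN t
  obtain ⟨i2, iN, -, -, -⟩ := hW.iota hN
  rw [kL, kL, Function.iterate_succ_apply', pro_getD hW.len i2 iN _ (by omega)]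
  by_cases hk : k = t + kiota (pro^[t] w)
  · rw [if_pos hk, if_pos (by omega)]
  · rw [if_neg hk, if_neg (by omega), if_pos (by omega)]
    congr 1; omega

theorem KW.mono {N w} (h : KW N w) (hN : 1 ≤ N) (t k d : ℕ) (h2 : k ≤ t + N)
    (hA : kL w t k = A) (hd : t + d < k) : kL w (t + d) k = A := by
  induction d with
  | zero => exact hA
  | succ d ih =>
    rw [← add_assoc, h.kL_succ hN _ _ (by omega) (by omega)]
    split_ifs
    · rfl
    · exact ih (by omega)

theorem klet {X Y : KLetter} (hX : X ≠ A) (hY : Y ≠ A) (h : X ≠ Y) :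
    (X = B ∧ Y = C) ∨ (X = C ∧ Y = B) := by
  cases X <;> cases Y <;> simp_all

theorem KW.stepInv {N w} (h : KW N w) (hN : 1 ≤ N) (t s e : ℕ) (hs : t + 1 < s) (hsh : s ≤ t + N)
    (H : KInv t (t + N) (kG w B t) (kG w C t) s e) :
    ∃ e', KInv (t + 1) (t + N + 1) (kG w B (t + 1)) (kG w C (t + 1)) s e' ∧
      (e' = e ∨ (e = t + 1 ∧ e' = t + N + 1)) := by
  obtain ⟨X, Y, hX, hY, hXY, -, S⟩ := h.step hN t
  rcases klet hX hY hXY with ⟨rfl, rfl⟩ | ⟨rfl, rfl⟩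
  · exact S.inv hs hsh H
  · obtain ⟨e', a, b⟩ := S.inv hs hsh H.symm
    exact ⟨e', a.symm, b⟩

theorem KW.initInv {N w} (h : KW N w) (hN : 1 ≤ N) (t : ℕ) :
    KInv (t + 1) (t + N + 1) (kG w B (t + 1)) (kG w C (t + 1)) (t + N + 1)
      (t + kiota (pro^[t] w)) := by
  obtain ⟨X, Y, hX, hY, hXY, -, S⟩ := h.step hN t
  have key : KInv (t + 1) (t + N + 1) (kG w X (t + 1)) (kG w Y (t + 1)) (t + N + 1)
      (t + kiota (pro^[t] w)) := by
    refine Or.inl ⟨?_, ?_, S.init⟩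
    · rw [Nat.add_sub_cancel, S.uend, S.ur _ S.h2 le_rfl, S.uhi]; norm_num
    · rw [Nat.add_sub_cancel, S.vend, S.vr _ S.h2 le_rfl, S.vhi]
  rcases klet hX hY hXY with ⟨rfl, rfl⟩ | ⟨rfl, rfl⟩
  · exact key
  · exact key.symm

theorem KStep.last {lo hi io U V U' V'} (S : KStep lo hi io U V U' V') {e : ℕ}
    (H : KInv lo hi U V (lo + 1) e) : e = io := by
  have hu := S.u1
  have hv := S.v1
  have hu0 := S.ulo
  have hv0 := S.vlo
  have h1 := S.h1
  rcases H with ⟨a, -, -⟩ | ⟨a, -, -⟩ | ⟨-, -, h3, h4, h5, h6⟩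
  · rw [Nat.add_sub_cancel] at a; omega
  · rw [Nat.add_sub_cancel] at a; omega
  · rw [Nat.add_sub_cancel] at h5 h6
    rcases lt_trichotomy e io with hlt | heq | hgt
    · have := S.upos e (by omega) hlt
      have := S.vpos e (by omega) hlt
      omega
    · exact heq
    · have := (h6 io (by omega) hgt).1
      have := S.uio
      omega

theorem KW.lastInv {N w} (h : KW N w) (hN : 1 ≤ N) (t e : ℕ)
    (H : KInv t (t + N) (kG w B t) (kG w C t) (t + 1) e) : e = t + kiota (pro^[t] w) := by
  obtain ⟨X, Y, hX, hY, hXY, -, S⟩ := h.step hN t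
  rcases klet hX hY hXY with ⟨rfl, rfl⟩ | ⟨rfl, rfl⟩
  · exact S.last H
  · exact S.last H.symm

/-- If the position `s` is bumped at step `t + 1`, then `s + N` is bumped at step `t + 1 + N`. -/
theorem KW.periodic {N w} (h : KW N w) (hN : 1 ≤ N) (t : ℕ) :
    t + N + kiota (pro^[t + N] w) = t + kiota (pro^[t] w) + N := by
  obtain ⟨i2, iN, -⟩ := (h.iter hN t).iota hN
  obtain ⟨j2, -, -⟩ := (h.iter hN (t + N)).iota hN
  have hd : ∀ d, d + 1 ≤ N → ∃ e, KInv (t + 1 + d) (t + 1 + d + N) (kG w B (t + 1 + d))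
      (kG w C (t + 1 + d)) (t + N + 1) e ∧
      (e = t + kiota (pro^[t] w) ∨ e = t + kiota (pro^[t] w) + N) := by
    intro d
    induction d with
    | zero =>
      intro _
      refine ⟨_, ?_, Or.inl rfl⟩
      have := h.initInv hN t
      rw [show t + 1 + 0 + N = t + N + 1 by omega]
      exact this
    | succ d ih =>
      intro hdN
      obtain ⟨e, H, he⟩ := ih (by omega)
      obtain ⟨e', H', he'⟩ := h.stepInv hN (t + 1 + d) _ e (by omega) (by omega) H
      refine ⟨e', ?_, by omega⟩
      rw [show t + 1 + (d + 1) + N = t + 1 + d + N + 1 by omega]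
      exact H'
  obtain ⟨e, H, he⟩ := hd (N - 1) (by omega)
  rw [show t + 1 + (N - 1) = t + N by omega] at H
  have := h.lastInv hN (t + N) e H
  omega

theorem KW.crux {N w} (h : KW N w) (hN : 1 ≤ N) (i s : ℕ) (hi : i < N) (hs : 1 ≤ s)
    (hp : i + kiota (pro^[i] w) = s + N) : kL w 0 s = A := by
  by_contra hne
  obtain ⟨i2, iN, -⟩ := (h.iter hN i).iota hN
  have hex : ∃ t, kL w t s = A := ⟨s - 1, by
    have := h.first hN (s - 1)
    rwa [Nat.sub_add_cancel hs] at this⟩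
  classical
  obtain ⟨t, ht, hmin⟩ : ∃ t, kL w t s = A ∧ ∀ t' < t, kL w t' s ≠ A :=
    ⟨Nat.find hex, Nat.find_spec hex, fun t' ht' => Nat.find_min hex ht'⟩
  have hts : t ≤ s - 1 := by
    by_contra hlt
    apply hmin (s - 1) (by omega)
    have := h.first hN (s - 1)
    rwa [Nat.sub_add_cancel hs] at this
  obtain _ | k := t
  · exact hne ht
  have hk := h.kL_succ hN k s (by omega) (by omega)
  have hsk : s = k + kiota (pro^[k] w) := by
    by_contra hns
    rw [if_neg hns, ht] at hk
    exact hmin k (by omega) hk.symm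
  have hper := h.periodic hN k
  obtain ⟨X, Y, hX, -, -, hl, -⟩ := h.step hN (k + N)
  rw [hper, ← hsk] at hl
  have hA : kL w (i + 1) (s + N) = A := by
    rw [h.kL_succ hN i (s + N) (by omega) (by omega), if_pos hp.symm]
  have := h.mono hN (i + 1) (s + N) (k + N - (i + 1)) (by omega) hA (by omega)
  rw [show i + 1 + (k + N - (i + 1)) = k + N by omega, hl] at this
  exact hX this

/-- For every `j ∈ {1, …, 3n}`: `w_{σ_w(j)} = A` if and only if `σ_w(j) < j`;
in particular `σ_w` has no fixed points (letters are 1-indexed).  Equivalently,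
`{i : w_i = A} = {i : σ_w⁻¹(i) > i}` and `{i : w_i ∈ {B, C}} = {i : σ_w⁻¹(i) < i}`. -/
theorem ksigma_antiexceedances (n : ℕ) (w : List KLetter) (hw : IsKrewerasWord n w) :
    ∀ j : ℕ, 1 ≤ j → j ≤ 3 * n →
      ((w.getD (ksigma n w j - 1) KLetter.A = KLetter.A ↔ ksigma n w j < j) ∧
        ksigma n w j ≠ j) := by
  intro j hj1 hj2
  have h := hw.kw
  have hN : 1 ≤ 3 * n := by omega
  obtain ⟨i, rfl⟩ : ∃ i, j = i + 1 := ⟨j - 1, by omega⟩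
  obtain ⟨i2, iN, -⟩ := (h.iter hN i).iota hN
  have hsig : ksigma n w (i + 1) = (i + kiota (pro^[i] w) - 1) % (3 * n) + 1 := by
    rw [ksigma, Nat.add_sub_cancel]
    congr 2; omega
  have hl0 : ∀ k, kL w 0 k = w.getD (k - 1) A := fun k => rfl
  obtain ⟨X, Y, hX, -, -, hl, -⟩ := h.step hN i
  rcases le_or_gt (i + kiota (pro^[i] w)) (3 * n) with hle | hgt
  · rw [Nat.mod_eq_of_lt (by omega)] at hsig
    have hs : ksigma n w (i + 1) = i + kiota (pro^[i] w) := by omega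
    rw [hs, ← hl0]
    refine ⟨⟨fun hA => ?_, fun hlt => by omega⟩, by omega⟩
    have := h.mono hN 0 _ i (by omega) hA (by omega)
    rw [Nat.zero_add, hl] at this
    exact absurd this hX
  · have hs : ksigma n w (i + 1) = i + kiota (pro^[i] w) - 3 * n := by
      rw [Nat.mod_eq_sub_mod (by omega), Nat.mod_eq_of_lt (by omega)] at hsig
      omega
    rw [hs, ← hl0]
    exact ⟨⟨fun _ => by omega, fun _ => h.crux hN i _ (by omega) (by omega) (by omega)⟩, by omega⟩
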